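/- Let a, b be coprime integers, not both zero. Then there exist infinitely many integer triples (x₀, x₁, x₂) such that x₀² + x₁² − x₂² = 1 and (a² + b²)·x₀ = (a² − b²) − 2ab·x₂ and (a² + b²)·x₁ = 2ab + (a² − b²)·x₂. That is, the light-cone line emanating from the rational point ((a² − b²)/(a² + b²), 2ab/(a² + b²)) of the throat circle of AdS₂ contains infinitely many integral points. -/

import Mathlib

/-!
Put `z = a + ib`. The line is `x₀ + i x₁ = (z / z̄) (1 + i x₂)`. If `w = u + iv` satisfies
`u a + v b = 1`, then `z̄ w = 1 + i x₂` with `x₂ = a v - b u`, so that `x₀ + i x₁ = z w`, which has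
no denominator: every Bézout relation yields an integral point of the line. Replacing `(u, v)` by
`(u + b t, v - a t)` preserves the relation and moves `x₂` by `-(a² + b²) t`.
-/

variable {R : Type*} [CommRing R]

variable (R) in
/-- The `R`-points of `AdS₂`, realized as a quadric in Minkowski space with metric
`diag(1, 1, -1)`. -/
def adS₂ : Set (R × R × R) :=
  {p | p.1 ^ 2 + p.2.1 ^ 2 - p.2.2 ^ 2 = 1}

/-- The `R`-points of the light-cone line through the point `e^{iφ} = (a + ib) / (a - ib)` of the
throat circle, parametrized by `μ = x₂`. The equations `x₀ = cos φ - μ sin φ` and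
`x₁ = sin φ + μ cos φ` are multiplied by `a² + b²`, so as to make sense over any ring. -/
def lightConeLine (a b : R) : Set (R × R × R) :=
  {p | (a ^ 2 + b ^ 2) * p.1 = (a ^ 2 - b ^ 2) - 2 * a * b * p.2.2 ∧
    (a ^ 2 + b ^ 2) * p.2.1 = 2 * a * b + (a ^ 2 - b ^ 2) * p.2.2}

/-- The point `x₀ + i x₁ = (a + ib)(u + iv)`, `x₂ = Im ((a - ib)(u + iv))` attached to a pair
`(u, v)` of Bézout coefficients of `(a, b)`. -/
def bezoutPoint (a b u v : R) : R × R × R :=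
  (a * u - b * v, a * v + b * u, a * v - b * u)

variable {a b : R}

theorem lightConeLine_subset_adS₂ (hN : IsRegular (a ^ 2 + b ^ 2)) :
    lightConeLine a b ⊆ adS₂ R := by
  rintro ⟨x₀, x₁, x₂⟩ ⟨h₀, h₁⟩
  -- `cos² φ + sin² φ = 1`, cleared of denominators
  have circle : (a ^ 2 - b ^ 2) ^ 2 + (2 * a * b) ^ 2 = (a ^ 2 + b ^ 2) ^ 2 := by ring
  refine (hN.pow 2).left ?_
  calc (a ^ 2 + b ^ 2) ^ 2 * (x₀ ^ 2 + x₁ ^ 2 - x₂ ^ 2)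
      = ((a ^ 2 + b ^ 2) * x₀) ^ 2 + ((a ^ 2 + b ^ 2) * x₁) ^ 2
          - (a ^ 2 + b ^ 2) ^ 2 * x₂ ^ 2 := by ring
    _ = ((a ^ 2 - b ^ 2) - 2 * a * b * x₂) ^ 2 + (2 * a * b + (a ^ 2 - b ^ 2) * x₂) ^ 2
          - (a ^ 2 + b ^ 2) ^ 2 * x₂ ^ 2 := by rw [h₀, h₁]
    _ = (a ^ 2 + b ^ 2) ^ 2 * 1 := by linear_combination (1 + x₂ ^ 2) * circle

theorem bezoutPoint_mem_lightConeLine {u v : R} (h : u * a + v * b = 1) :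
    bezoutPoint a b u v ∈ lightConeLine a b := by
  dsimp only [lightConeLine, bezoutPoint, Set.mem_ofPred_eq]
  constructor
  · linear_combination (a ^ 2 - b ^ 2) * h
  · linear_combination 2 * a * b * h

theorem bezoutPoint_add_mul_sub_mul_injective (hN : IsRegular (a ^ 2 + b ^ 2)) (u v : R) :
    Function.Injective fun t ↦ bezoutPoint a b (u + b * t) (v - a * t) := by
  intro s t hst
  have hx₂ : a * (v - a * s) - b * (u + b * s) = a * (v - a * t) - b * (u + b * t) :=
    congrArg (·.2.2) hst
  exact hN.left (by linear_combination -hx₂)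

theorem lightConeLine_infinite [Infinite R] (hco : IsCoprime a b)
    (hN : IsRegular (a ^ 2 + b ^ 2)) : (lightConeLine a b).Infinite := by
  obtain ⟨u, v, h⟩ := hco
  have bezout (t : R) : (u + b * t) * a + (v - a * t) * b = 1 := by linear_combination h
  exact Set.infinite_of_injective_forall_mem (bezoutPoint_add_mul_sub_mul_injective hN u v)
    fun t ↦ bezoutPoint_mem_lightConeLine (bezout t)

theorem statement5_general [Infinite R] (hco : IsCoprime a b) (hN : IsRegular (a ^ 2 + b ^ 2)) :
    (adS₂ R ∩ lightConeLine a b).Infinite := by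
  rw [Set.inter_eq_right.mpr (lightConeLine_subset_adS₂ hN)]
  exact lightConeLine_infinite hco hN

/-- For coprime integers `a, b`, not both zero, the light-cone line
emanating from the rational point `((a² − b²)/(a² + b²), 2ab/(a² + b²))` of the throat
circle contains infinitely many integral points of the hyperboloid
`x₀² + x₁² − x₂² = 1`. -/
theorem statement5 (a b : ℤ) (hco : IsCoprime a b) (hne : ¬(a = 0 ∧ b = 0)) :
    Set.Infinite {p : ℤ × ℤ × ℤ |
      p.1 ^ 2 + p.2.1 ^ 2 - p.2.2 ^ 2 = 1 ∧
      (a ^ 2 + b ^ 2) * p.1 = (a ^ 2 - b ^ 2) - 2 * a * b * p.2.2 ∧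
      (a ^ 2 + b ^ 2) * p.2.1 = 2 * a * b + (a ^ 2 - b ^ 2) * p.2.2} :=
  statement5_general hco (.of_ne_zero hco.sq_add_sq_ne_zero)
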